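/- arXiv:1901.06301 — 2 statements merged into one kernel-verified Lean document; each statement's English description precedes it below -/
import Mathlib

section
/- Let r be an even natural number. Then the sum of the dimensions over ℝ of the eigenspaces of Φ for the eigenvalues 1 and −1 is at least (r−3)/3 if r ≡ 0 (mod 6), at least (r+1)/3 if r ≡ 2 (mod 6), and at least (r+5)/3 if r ≡ 4 (mod 6). -/
open MvPolynomial

/-- The substitution `(σ* f)(x,y) = f(x+y, y)` as a linear endomorphism of the
polynomial ring `ℝ[x,y]`. -/
noncomputable def sigmaStar : MvPolynomial (Fin 2) ℝ →ₗ[ℝ] MvPolynomial (Fin 2) ℝ :=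
  (aeval ![X 0 + X 1, X 1]).toLinearMap

/-- The substitution `(τ* f)(x,y) = f(x, x+y)` as a linear endomorphism of the
polynomial ring `ℝ[x,y]`. -/
noncomputable def tauStar : MvPolynomial (Fin 2) ℝ →ₗ[ℝ] MvPolynomial (Fin 2) ℝ :=
  (aeval ![X 0, X 0 + X 1]).toLinearMap

/-- The operator `Φ : f(x,y) ↦ f(x+y, y) + f(x, x+y)`.  It preserves the space of
homogeneous polynomials of each degree `r`. -/
noncomputable def Phi : MvPolynomial (Fin 2) ℝ →ₗ[ℝ] MvPolynomial (Fin 2) ℝ :=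
  sigmaStar + tauStar

/-- The eigenspace of `Φ` for the eigenvalue `1`, inside the space `V` of homogeneous
polynomials of degree `r`: `{f ∈ V : Φ f = f}`. -/
noncomputable def eigPlus (r : ℕ) : Submodule ℝ (MvPolynomial (Fin 2) ℝ) :=
  MvPolynomial.homogeneousSubmodule (Fin 2) ℝ r ⊓
    LinearMap.ker (Phi - LinearMap.id)

/-- The eigenspace of `Φ` for the eigenvalue `-1`, inside the space `V` of homogeneous
polynomials of degree `r`: `{f ∈ V : Φ f = -f}`. -/
noncomputable def eigMinus (r : ℕ) : Submodule ℝ (MvPolynomial (Fin 2) ℝ) :=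
  MvPolynomial.homogeneousSubmodule (Fin 2) ℝ r ⊓
    LinearMap.ker (Phi + LinearMap.id)

/-!
Let `S : f(x, y) ↦ f(-y, x)` and `U : f(x, y) ↦ f(-y, x + y)`. Then `Φ ∘ S = U + U²`, so on
`K = ker (1 + U + U²)` we have `Φ (S f) = -f`: the elements of `K` with `S f = f` are eigenvectors
of `Φ` for `-1`, those with `S f = -f` are eigenvectors for `1`. In even degree `r` the map `S` is
an involution of the space `V` of forms of degree `r`, hence the two eigenspaces of `S` meet `K` in
spaces whose dimensions add up to at least `2 dim K - dim V = 2 dim K - (r + 1)`.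

In even degree `U³ = 1`, so `K` contains all `f - U f`. The form `q = x² + xy + y²` is invariant
under `U`, so `f ↦ q f` embeds `K` in degree `r` into `K` in degree `r + 2`. Its image vanishes
at the eigenvector `(1, -ζ)` of `U`, where `ζ` is a primitive sixth root of unity, while `f - U f`
takes the value `(1 - ζ ^ (r + 2)) f(1, -ζ)` there. So `dim K` grows by at least `2` unless
`6 ∣ r + 2`, which gives `dim K ≥ r - 2 ⌊r / 6⌋`.
-/

section LinearAlgebra

variable {D F R M N W : Type*} [DivisionRing D] [Field F] [CommRing R]
  [AddCommGroup M] [AddCommGroup N] [AddCommGroup W]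

lemma finrank_add_finrank_le_finrank_inf_add_finrank [Module D M] {V P Q : Submodule D M}
    [FiniteDimensional D V] (hP : P ≤ V) (hQ : Q ≤ V) :
    Module.finrank D P + Module.finrank D Q ≤
      Module.finrank D ↥(P ⊓ Q) + Module.finrank D V := by
  have := Submodule.finiteDimensional_of_le hP
  have := Submodule.finiteDimensional_of_le hQ
  have hsup := Submodule.finrank_mono (sup_le hP hQ)
  have := Submodule.finrank_sup_add_finrank_inf_eq P Q
  lia

lemma le_eigenspace_one_sup_eigenspace_neg_one [Module R M] [Invertible (2 : R)]
    {V : Submodule R M} {s : Module.End R M} (hV : ∀ v ∈ V, s v ∈ V) (hs : ∀ v ∈ V, s (s v) = v) :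
    V ≤ (V ⊓ s.eigenspace 1) ⊔ (V ⊓ s.eigenspace (-1)) := by
  intro v hv
  have hplus : v + s v ∈ V ⊓ s.eigenspace 1 := by
    refine ⟨V.add_mem hv (hV v hv), Module.End.mem_eigenspace_iff.mpr ?_⟩
    rw [map_add, hs v hv, one_smul, add_comm]
  have hminus : v - s v ∈ V ⊓ s.eigenspace (-1) := by
    refine ⟨V.sub_mem hv (hV v hv), Module.End.mem_eigenspace_iff.mpr ?_⟩
    rw [map_sub, hs v hv, neg_one_smul, neg_sub]
  have hsum : v = (⅟2 : R) • (v + s v) + (⅟2 : R) • (v - s v) := by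
    rw [← smul_add, add_add_sub_cancel, ← two_smul R v, invOf_smul_smul]
  rw [hsum]
  exact Submodule.add_mem_sup (Submodule.smul_mem _ _ hplus) (Submodule.smul_mem _ _ hminus)

lemma two_mul_finrank_le_of_involution [Module F M] [NeZero (2 : F)]
    {V P : Submodule F M} [FiniteDimensional F V] {s : Module.End F M} (hV : ∀ v ∈ V, s v ∈ V)
    (hs : ∀ v ∈ V, s (s v) = v) (hP : P ≤ V) :
    2 * Module.finrank F P ≤ Module.finrank F ↥(P ⊓ s.eigenspace 1) +
      Module.finrank F ↥(P ⊓ s.eigenspace (-1)) + Module.finrank F V := by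
  have hinf (μ : F) : P ⊓ (V ⊓ s.eigenspace μ) = P ⊓ s.eigenspace μ := by
    rw [← inf_assoc, inf_eq_left.mpr hP]
  have hone := finrank_add_finrank_le_finrank_inf_add_finrank hP
    (inf_le_left : V ⊓ s.eigenspace 1 ≤ V)
  have hneg := finrank_add_finrank_le_finrank_inf_add_finrank hP
    (inf_le_left : V ⊓ s.eigenspace (-1) ≤ V)
  have hVle : Module.finrank F V ≤
      Module.finrank F ↥(V ⊓ s.eigenspace 1) + Module.finrank F ↥(V ⊓ s.eigenspace (-1)) := by
    let := invertibleOfNonzero (two_ne_zero : (2 : F) ≠ 0)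
    have := Submodule.finiteDimensional_of_le (inf_le_left : V ⊓ s.eigenspace 1 ≤ V)
    have := Submodule.finiteDimensional_of_le (inf_le_left : V ⊓ s.eigenspace (-1) ≤ V)
    exact (Submodule.finrank_mono (le_eigenspace_one_sup_eigenspace_neg_one hV hs)).trans
      (Submodule.finrank_add_le_finrank_add_finrank _ _)
  rw [hinf] at hone hneg
  lia

lemma finrank_add_finrank_le_of_comp_eq_zero [Module D M] [Module D N] [Module D W]
    [FiniteDimensional D N] {g : M →ₗ[D] N} {e : N →ₗ[D] W}
    (hg : Function.Injective g) (he : Function.Surjective e) (heg : e ∘ₗ g = 0) :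
    Module.finrank D M + Module.finrank D W ≤ Module.finrank D N := by
  rw [← LinearMap.finrank_range_add_finrank_ker e, LinearMap.range_eq_top.mpr he,
    finrank_top, ← LinearMap.finrank_range_of_inj hg, add_comm]
  gcongr
  exact Submodule.finrank_mono (LinearMap.range_le_ker_iff.mpr heg)

end LinearAlgebra

section Homogeneous

variable {σ R A : Type*} [CommSemiring R]

instance finite_homogeneousSubmodule [Finite σ] (n : ℕ) :
    Module.Finite R (homogeneousSubmodule σ R n) :=
  Module.Finite.iff_fg.mpr (homogeneousSubmodule_fg σ R n)

lemma finrank_homogeneousSubmodule [Fintype σ] [StrongRankCondition R] (n : ℕ) :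
    Module.finrank R (homogeneousSubmodule σ R n) = (Fintype.card σ).multichoose n := by
  classical
  have hset : {d : σ →₀ ℕ | d.degree = n} =
      (Finset.univ.finsuppAntidiag n : Finset (σ →₀ ℕ)) := by
    ext d
    simp [Finsupp.degree_eq_sum]
  rw [homogeneousSubmodule_eq_finsupp_supported, ← restrictSupport,
    Module.finrank_eq_nat_card_basis (basisRestrictSupport R _), hset, Nat.card_coe_set_eq,
    Set.ncard_coe_finset, Finset.card_finsuppAntidiag_nat_eq_multichoose, Finset.card_univ]

lemma aeval_smul_of_isHomogeneous [CommSemiring A] [Algebra R A] {n : ℕ} {f : MvPolynomial σ R}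
    (hf : f.IsHomogeneous n) (c : A) (v : σ → A) : aeval (c • v) f = c ^ n * aeval v f := by
  simp only [aeval_def, eval₂_eq, Pi.smul_apply, smul_eq_mul, mul_pow, Finset.prod_mul_distrib,
    Finset.prod_pow_eq_pow_sum, Finset.mul_sum]
  refine Finset.sum_congr rfl fun d hd ↦ ?_
  rw [← hf.degree_eq_sum_deg_support hd, mul_left_comm]

end Homogeneous

section LinSubst

open scoped Matrix

variable {l m n R A : Type*} [Fintype m] [Fintype n]

section CommSemiring

variable [CommSemiring R]

/-- The substitution `f(v) ↦ f(M v)` of linear forms given by a matrix `M`, where `v` is the column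
vector of the variables. It reverses products: `M * N` acts as `M` followed by `N`. -/
noncomputable def linSubst (M : Matrix l m R) : MvPolynomial l R →ₐ[R] MvPolynomial m R :=
  bind₁ M.toMvPolynomial

lemma linSubst_linSubst (M : Matrix l m R) (N : Matrix m n R) (f : MvPolynomial l R) :
    linSubst N (linSubst M f) = linSubst (M * N) f := by
  simp only [linSubst, bind₁_bind₁, ← Matrix.toMvPolynomial_mul]

lemma isHomogeneous_linSubst (M : Matrix l m R) {d : ℕ} {f : MvPolynomial l R}
    (hf : f.IsHomogeneous d) : (linSubst M f).IsHomogeneous d := by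
  rw [linSubst, ← aeval_eq_bind₁, ← one_mul d]
  exact hf.aeval _ M.toMvPolynomial_isHomogeneous

lemma aeval_linSubst [CommSemiring A] [Algebra R A] (M : Matrix l m R) (v : m → A)
    (f : MvPolynomial l R) :
    aeval v (linSubst M f) = aeval (M.map (algebraMap R A) *ᵥ v) f := by
  rw [linSubst, aeval_bind₁]
  congr 2
  ext i
  rw [← Matrix.toMvPolynomial_eval_eq_apply, Matrix.toMvPolynomial_map, eval_map, aeval_def]

end CommSemiring

lemma linSubst_neg_one_of_even [CommRing R] [DecidableEq m] {d : ℕ} (hd : Even d)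
    {f : MvPolynomial m R} (hf : f.IsHomogeneous d) : linSubst (-1 : Matrix m m R) f = f := by
  have hX : (-1 : Matrix m m R).toMvPolynomial = (-1 : MvPolynomial m R) • X := by
    ext1 i
    simp [Matrix.toMvPolynomial, Matrix.one_apply, ← C_mul_X_eq_monomial]
  rw [linSubst, hX, ← aeval_eq_bind₁, aeval_smul_of_isHomogeneous hf, hd.neg_one_pow, one_mul,
    aeval_X_left_apply]

end LinSubst

section ModularMatrices

open scoped Matrix

/-- The matrix of `(x, y) ↦ (-y, x)`, the generator `S` of `SL₂(ℤ)`. -/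
def matS : Matrix (Fin 2) (Fin 2) ℝ := !![0, -1; 1, 0]

/-- The matrix of `(x, y) ↦ (-y, x + y)`, the element `U = S T` of order six of `SL₂(ℤ)`,
where `T` is the matrix of `(x, y) ↦ (x + y, y)`. -/
def matU : Matrix (Fin 2) (Fin 2) ℝ := !![0, -1; 1, 1]

lemma matS_mul_matS : matS * matS = -1 := by
  simp [matS, Matrix.one_fin_two]

lemma matU_pow_three : matU ^ 3 = -1 := by
  simp [matU, pow_succ, Matrix.one_fin_two]

lemma toMvPolynomial_matU : matU.toMvPolynomial = ![-X 1, X 0 + X 1] := by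
  ext1 i
  fin_cases i <;> simp [matU, Matrix.toMvPolynomial, X]

lemma matU_mulVec {z : ℂ} (hz : z ^ 2 = z - 1) :
    matU.map (algebraMap ℝ ℂ) *ᵥ ![1, -z] = z • ![1, -z] := by
  have hfix : 1 + -z = -(z * z) := by linear_combination hz
  ext i
  fin_cases i
  · simp [matU]
  · simpa [matU] using hfix

lemma linSubst_matS_linSubst_matS {r : ℕ} (hr : Even r) {f : MvPolynomial (Fin 2) ℝ}
    (hf : f.IsHomogeneous r) : linSubst matS (linSubst matS f) = f := by
  rw [linSubst_linSubst, matS_mul_matS, linSubst_neg_one_of_even hr hf]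

lemma sigmaStar_eq_linSubst : sigmaStar = (linSubst !![1, 1; 0, 1]).toLinearMap := by
  rw [sigmaStar, linSubst, ← aeval_eq_bind₁]
  congr 2
  ext1 i
  fin_cases i <;> simp [Matrix.toMvPolynomial, X]

lemma tauStar_eq_linSubst : tauStar = (linSubst !![1, 0; 1, 1]).toLinearMap := by
  rw [tauStar, linSubst, ← aeval_eq_bind₁]
  congr 2
  ext1 i
  fin_cases i <;> simp [Matrix.toMvPolynomial, X]

lemma Phi_linSubst_matS (f : MvPolynomial (Fin 2) ℝ) :
    Phi (linSubst matS f) = linSubst matU f + linSubst (matU ^ 2) f := by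
  have hσ : matS * !![1, 1; 0, 1] = matU := by simp [matS, matU]
  have hτ : matS * !![1, 0; 1, 1] = matU ^ 2 := by simp [matS, matU, sq]
  rw [Phi, LinearMap.add_apply, sigmaStar_eq_linSubst, tauStar_eq_linSubst,
    AlgHom.toLinearMap_apply, AlgHom.toLinearMap_apply, linSubst_linSubst, linSubst_linSubst, hσ,
    hτ]

end ModularMatrices

section NormKer

/-- The kernel of the norm `1 + U + U²` of `U : f(x, y) ↦ f(-y, x + y)` on forms of degree `r`. -/
noncomputable def normKer (r : ℕ) : Submodule ℝ (MvPolynomial (Fin 2) ℝ) :=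
  homogeneousSubmodule (Fin 2) ℝ r ⊓ LinearMap.ker (LinearMap.id + (linSubst matU).toLinearMap +
    (linSubst (matU ^ 2)).toLinearMap)

lemma normKer_le_homogeneousSubmodule (r : ℕ) : normKer r ≤ homogeneousSubmodule (Fin 2) ℝ r :=
  inf_le_left

instance finite_normKer (r : ℕ) : Module.Finite ℝ (normKer r) :=
  Submodule.finiteDimensional_of_le (normKer_le_homogeneousSubmodule r)

lemma mem_normKer {r : ℕ} {f : MvPolynomial (Fin 2) ℝ} :
    f ∈ normKer r ↔
      f.IsHomogeneous r ∧ f + linSubst matU f + linSubst (matU ^ 2) f = 0 :=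
  Iff.rfl

lemma sub_linSubst_matU_mem_normKer {r : ℕ} (hr : Even r) {f : MvPolynomial (Fin 2) ℝ}
    (hf : f.IsHomogeneous r) : f - linSubst matU f ∈ normKer r := by
  refine mem_normKer.mpr ⟨hf.sub (isHomogeneous_linSubst matU hf), ?_⟩
  have hcube : linSubst (matU * matU ^ 2) f = f := by
    rw [← pow_succ', matU_pow_three, linSubst_neg_one_of_even hr hf]
  rw [map_sub, map_sub, linSubst_linSubst, linSubst_linSubst, hcube, ← sq]
  abel

/-- The norm form `x² + xy + y²` of the Eisenstein integers, the quadratic form invariant under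
`U`. -/
noncomputable def eisensteinForm : MvPolynomial (Fin 2) ℝ := X 0 ^ 2 + X 0 * X 1 + X 1 ^ 2

lemma isHomogeneous_eisensteinForm : eisensteinForm.IsHomogeneous 2 :=
  ((isHomogeneous_X_pow 0 2).add ((isHomogeneous_X ℝ 0).mul (isHomogeneous_X ℝ 1))).add
    (isHomogeneous_X_pow 1 2)

lemma eisensteinForm_ne_zero : eisensteinForm ≠ 0 := by
  intro h
  have := congrArg (eval ![1, 0]) h
  simp [eisensteinForm] at this

lemma aeval_eisensteinForm {z : ℂ} (hz : z ^ 2 = z - 1) : aeval ![1, -z] eisensteinForm = 0 := by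
  simp only [eisensteinForm, map_add, map_mul, map_pow, aeval_X, Matrix.cons_val_zero,
    Matrix.cons_val_one]
  linear_combination hz

lemma linSubst_matU_eisensteinForm : linSubst matU eisensteinForm = eisensteinForm := by
  simp only [linSubst, toMvPolynomial_matU, eisensteinForm, map_add, map_mul, map_pow,
    bind₁_X_right, Matrix.cons_val_zero, Matrix.cons_val_one]
  ring

lemma eisensteinForm_mul_mem_normKer {r : ℕ} {f : MvPolynomial (Fin 2) ℝ} (hf : f ∈ normKer r) :
    eisensteinForm * f ∈ normKer (r + 2) := by
  obtain ⟨hhom, hzero⟩ := mem_normKer.mp hf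
  refine mem_normKer.mpr ⟨add_comm r 2 ▸ isHomogeneous_eisensteinForm.mul hhom, ?_⟩
  have hsq : linSubst (matU ^ 2) eisensteinForm = eisensteinForm := by
    rw [sq, ← linSubst_linSubst, linSubst_matU_eisensteinForm, linSubst_matU_eisensteinForm]
  rw [map_mul, map_mul, linSubst_matU_eisensteinForm, hsq, ← mul_add, ← mul_add, hzero, mul_zero]

/-- Multiplication by `x² + xy + y²`, which raises the degree of the forms in `normKer` by two. -/
noncomputable def mulEisensteinForm (r : ℕ) : normKer r →ₗ[ℝ] normKer (r + 2) :=
  (LinearMap.mulLeft ℝ eisensteinForm).restrict fun _ ↦ eisensteinForm_mul_mem_normKer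

lemma mulEisensteinForm_injective (r : ℕ) : Function.Injective (mulEisensteinForm r) :=
  fun _ _ h ↦ Subtype.ext (mul_left_cancel₀ eisensteinForm_ne_zero (congrArg Subtype.val h))

lemma finrank_normKer_le_finrank_normKer_add_two (r : ℕ) :
    Module.finrank ℝ (normKer r) ≤ Module.finrank ℝ (normKer (r + 2)) :=
  LinearMap.finrank_le_finrank_of_injective (mulEisensteinForm_injective r)

lemma exists_isHomogeneous_aeval_eq {z : ℂ} (hz : z.im ≠ 0) {r : ℕ} (hr : r ≠ 0)
    (w : ℂ) :
    ∃ f : MvPolynomial (Fin 2) ℝ, f.IsHomogeneous r ∧ aeval ![1, z] f = w := by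
  obtain ⟨k, rfl⟩ := Nat.exists_eq_succ_of_ne_zero hr
  have hlin : ((w.re - w.im / z.im * z.re : ℝ) : ℂ) + ((w.im / z.im : ℝ) : ℂ) * z = w := by
    apply Complex.ext
    · simp
    · simp [hz]
  refine ⟨X 0 ^ k * (C (w.re - w.im / z.im * z.re) * X 0 + C (w.im / z.im) * X 1), ?_, ?_⟩
  · exact (isHomogeneous_X_pow 0 k).mul
      ((isHomogeneous_C_mul_X _ 0).add (isHomogeneous_C_mul_X _ 1))
  · simpa using hlin

lemma aeval_sub_linSubst_matU {z : ℂ} (hz : z ^ 2 = z - 1) {r : ℕ} {f : MvPolynomial (Fin 2) ℝ}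
    (hf : f.IsHomogeneous r) :
    aeval ![1, -z] (f - linSubst matU f) = (1 - z ^ r) * aeval ![1, -z] f := by
  rw [map_sub, aeval_linSubst, matU_mulVec hz, aeval_smul_of_isHomogeneous hf, sub_mul, one_mul]

lemma exists_mem_normKer_aeval_eq {z : ℂ} (hz : z ^ 2 = z - 1) (him : z.im ≠ 0) {r : ℕ}
    (hr : Even r) (hpow : z ^ r ≠ 1) (w : ℂ) :
    ∃ f ∈ normKer r, aeval ![1, -z] f = w := by
  have hr0 : r ≠ 0 := fun h ↦ hpow (by rw [h, pow_zero])
  obtain ⟨f, hf, hfw⟩ := exists_isHomogeneous_aeval_eq (z := -z) (by simpa using him) hr0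
    (w / (1 - z ^ r))
  refine ⟨f - linSubst matU f, sub_linSubst_matU_mem_normKer hr hf, ?_⟩
  rw [aeval_sub_linSubst_matU hz hf, hfw, mul_div_cancel₀ _ (sub_ne_zero.mpr hpow.symm)]

lemma sq_eq_sub_one_of_isPrimitiveRoot_six {R : Type*} [CommRing R] [IsDomain R] {z : R}
    (hz : IsPrimitiveRoot z 6) : z ^ 2 = z - 1 := by
  have hroot := hz.isRoot_cyclotomic (by norm_num)
  rw [Polynomial.cyclotomic_six, Polynomial.IsRoot.def] at hroot
  simp only [Polynomial.eval_add, Polynomial.eval_sub, Polynomial.eval_pow, Polynomial.eval_X,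
    Polynomial.eval_one] at hroot
  linear_combination hroot

lemma im_ne_zero_of_sq_eq_sub_one {z : ℂ} (hz : z ^ 2 = z - 1) : z.im ≠ 0 := by
  intro him
  have hre : z.re ^ 2 = z.re - 1 := by
    simpa [sq, him] using congrArg Complex.re hz
  nlinarith [sq_nonneg (z.re - 1 / 2)]

lemma finrank_normKer_add_two_le {r : ℕ} (hr : Even r) (h6 : ¬6 ∣ r + 2) :
    Module.finrank ℝ (normKer r) + 2 ≤ Module.finrank ℝ (normKer (r + 2)) := by
  obtain ⟨z, hprim⟩ : ∃ z : ℂ, IsPrimitiveRoot z 6 := ⟨_, Complex.isPrimitiveRoot_exp 6 (by simp)⟩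
  have hz := sq_eq_sub_one_of_isPrimitiveRoot_six hprim
  let ev : normKer (r + 2) →ₗ[ℝ] ℂ := (aeval ![1, -z]).toLinearMap.domRestrict _
  have hev : Function.Surjective ev := fun w ↦
    have ⟨f, hf, hfw⟩ := exists_mem_normKer_aeval_eq hz (im_ne_zero_of_sq_eq_sub_one hz)
      (hr.add even_two) (mt (hprim.pow_eq_one_iff_dvd _).mp h6) w
    ⟨⟨f, hf⟩, hfw⟩
  have hcomp : ev ∘ₗ mulEisensteinForm r = 0 := by
    ext f
    change aeval ![1, -z] (eisensteinForm * (f : MvPolynomial (Fin 2) ℝ)) = 0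
    rw [map_mul, aeval_eisensteinForm hz, zero_mul]
  simpa only [Complex.finrank_real_complex] using
    finrank_add_finrank_le_of_comp_eq_zero (mulEisensteinForm_injective r) hev hcomp

lemma le_finrank_normKer_add {r : ℕ} (hr : Even r) :
    r ≤ Module.finrank ℝ (normKer r) + 2 * (r / 6) := by
  obtain ⟨k, rfl⟩ := even_iff_exists_two_mul.mp hr
  induction k with
  | zero => simp
  | succ k ih =>
    have ih := ih (even_two_mul k)
    rw [mul_add_one]
    by_cases h6 : 6 ∣ 2 * k + 2
    · have := finrank_normKer_le_finrank_normKer_add_two (2 * k)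
      lia
    · have := finrank_normKer_add_two_le (even_two_mul k) h6
      lia

end NormKer

section Eigenspaces

instance finite_eigPlus (r : ℕ) : Module.Finite ℝ (eigPlus r) :=
  Submodule.finiteDimensional_of_le (inf_le_left : eigPlus r ≤ homogeneousSubmodule (Fin 2) ℝ r)

instance finite_eigMinus (r : ℕ) : Module.Finite ℝ (eigMinus r) :=
  Submodule.finiteDimensional_of_le (inf_le_left : eigMinus r ≤ homogeneousSubmodule (Fin 2) ℝ r)

lemma mem_eigPlus {r : ℕ} {f : MvPolynomial (Fin 2) ℝ} :
    f ∈ eigPlus r ↔ f.IsHomogeneous r ∧ Phi f = f := by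
  simp [eigPlus, sub_eq_zero]

lemma mem_eigMinus {r : ℕ} {f : MvPolynomial (Fin 2) ℝ} :
    f ∈ eigMinus r ↔ f.IsHomogeneous r ∧ Phi f = -f := by
  simp [eigMinus, eq_neg_iff_add_eq_zero]

lemma Phi_linSubst_matS_of_mem_normKer {r : ℕ} {f : MvPolynomial (Fin 2) ℝ}
    (hf : f ∈ normKer r) : Phi (linSubst matS f) = -f := by
  rw [Phi_linSubst_matS, eq_neg_iff_add_eq_zero, add_comm, ← add_assoc, (mem_normKer.mp hf).2]

lemma normKer_inf_eigenspace_one_le_eigMinus (r : ℕ) :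
    normKer r ⊓ Module.End.eigenspace (linSubst matS).toLinearMap 1 ≤ eigMinus r := by
  rintro f ⟨hf, hS⟩
  have hS : linSubst matS f = f := by simpa using hS
  have hPhi := Phi_linSubst_matS_of_mem_normKer hf
  rw [hS] at hPhi
  exact mem_eigMinus.mpr ⟨(mem_normKer.mp hf).1, hPhi⟩

lemma normKer_inf_eigenspace_neg_one_le_eigPlus (r : ℕ) :
    normKer r ⊓ Module.End.eigenspace (linSubst matS).toLinearMap (-1) ≤ eigPlus r := by
  rintro f ⟨hf, hS⟩
  have hS : linSubst matS f = -f := by simpa using hS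
  have hPhi := Phi_linSubst_matS_of_mem_normKer hf
  rw [hS, map_neg, neg_inj] at hPhi
  exact mem_eigPlus.mpr ⟨(mem_normKer.mp hf).1, hPhi⟩

lemma two_mul_finrank_normKer_le {r : ℕ} (hr : Even r) :
    2 * Module.finrank ℝ (normKer r) ≤
      Module.finrank ℝ (eigPlus r) + Module.finrank ℝ (eigMinus r) + (r + 1) := by
  have hinv := two_mul_finrank_le_of_involution (s := (linSubst matS).toLinearMap)
    (fun _ hf ↦ isHomogeneous_linSubst matS hf) (fun _ hf ↦ linSubst_matS_linSubst_matS hr hf)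
    (normKer_le_homogeneousSubmodule r)
  have hplus := Submodule.finrank_mono (normKer_inf_eigenspace_neg_one_le_eigPlus r)
  have hminus := Submodule.finrank_mono (normKer_inf_eigenspace_one_le_eigMinus r)
  rw [finrank_homogeneousSubmodule, Fintype.card_fin, Nat.multichoose_two] at hinv
  lia

end Eigenspaces

/-- For even `r`, the sum of the dimensions of the eigenspaces of `Φ` on `V` for the
eigenvalues `1` and `-1` is at least `(r-3)/3` if `r ≡ 0 (mod 6)`, at least `(r+1)/3`
if `r ≡ 2 (mod 6)`, and at least `(r+5)/3` if `r ≡ 4 (mod 6)`. -/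
theorem dim_eig_Phi_sum (r : ℕ) (hr : Even r) :
    (r % 6 = 0 → ((r : ℤ) - 3) / 3 ≤
      ((Module.finrank ℝ ↥(eigPlus r) + Module.finrank ℝ ↥(eigMinus r) : ℕ) : ℤ)) ∧
    (r % 6 = 2 → ((r : ℤ) + 1) / 3 ≤
      ((Module.finrank ℝ ↥(eigPlus r) + Module.finrank ℝ ↥(eigMinus r) : ℕ) : ℤ)) ∧
    (r % 6 = 4 → ((r : ℤ) + 5) / 3 ≤
      ((Module.finrank ℝ ↥(eigPlus r) + Module.finrank ℝ ↥(eigMinus r) : ℕ) : ℤ)) := by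
  have hK := le_finrank_normKer_add hr
  have hPhi := two_mul_finrank_normKer_le hr
  lia
end

section
/- Let r be an even natural number and set ℓ = (r+12)/3 if r ≡ 0 (mod 6), ℓ = (r+10)/3 if r ≡ 2 (mod 6), and ℓ = (r+8)/3 if r ≡ 4 (mod 6). Then there exist real numbers a_1, …, a_ℓ and a natural number N such that, for every homogeneous polynomial f of degree r in two real variables and every n ≥ N, S_n(f) = Σ_{j=1}^{ℓ} a_j S_{n−j}(f). The coefficients a_j depend only on r, not on f. -/
/-- The Stern array: `stern n k` is the entry `s(n,k)` of the Stern array,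
with `s(1,1) = 1`, `s(1,k) = 0` for `k ≠ 1`, and
`s(n,2k) = s(n-1,k)`, `s(n,2k+1) = s(n-1,k) + s(n-1,k+1)`. -/
def stern : ℕ → ℤ → ℕ
  | 0, _ => 0
  | 1, k => if k = 1 then 1 else 0
  | n + 2, k =>
    if k % 2 = 0 then stern (n + 1) (k / 2)
    else stern (n + 1) ((k - 1) / 2) + stern (n + 1) ((k + 1) / 2)

/-- For a polynomial `f` in two variables,
`S n f = ∑_{k=0}^{2^n - 1} f(s(n,k), s(n,k+1))`. -/
noncomputable def S (n : ℕ) (f : MvPolynomial (Fin 2) ℝ) : ℝ :=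
  ∑ k ∈ Finset.range (2 ^ n),
    MvPolynomial.eval ![(stern n (k : ℤ) : ℝ), (stern n ((k : ℤ) + 1) : ℝ)] f

/-!
Write `f ∣ A` for the form `f ∘ A`. Since `S (n + 1) f = S n (T f)` for `n ≥ 1`, where
`T f = f ∣ P + f ∣ Q` with `P` and `Q` the elementary shears, a monic polynomial `p` with
`p(T) f = 0` yields a recurrence of order `deg p`; as `S n f` does not change when the variables are
swapped, `f` may be taken symmetric.

The swap and a matrix of order three generate a copy of `S₃`. Let `W` be the space of its invariant
forms of degree `r` and `ε = diag(1, -1)`. As `r` is even, matrices matter only up to sign, and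
inspecting products gives `T f + f ∣ ε ∈ W` for symmetric `f`, and `T (w ∣ ε) = 2 w` for `w ∈ W`.
Hence `U = W + W ∣ ε` is stable under `T`, and `T² f - f ∈ U` for symmetric `f`. So `q(T) (T² - 1)`
annihilates all symmetric forms, where `q` is the characteristic polynomial of `T` on `U`. Finally
`dim W ≤ ⌊r / 6⌋ + 1`, because invariants of even degree are polynomials in `x² + xy + y²` and
`(xy(x + y))²`: an invariant vanishing at `(1, 0)` is divisible by `xy(x + y)`, and an invariant of
odd degree always vanishes there.
-/

namespace Stern

open MvPolynomial Module
open scoped Matrix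

section LinearSubstitution

variable {n R : Type*} [Fintype n]

section CommSemiring

variable [CommSemiring R]

/-- The linear change of variables `f ↦ f ∘ A`, as a right action of square matrices on
polynomials. -/
noncomputable def linSubst (A : Matrix n n R) : MvPolynomial n R →ₐ[R] MvPolynomial n R :=
  aeval A.toMvPolynomial

lemma eval_linSubst (A : Matrix n n R) (f : MvPolynomial n R) (v : n → R) :
    eval v (linSubst A f) = eval (A *ᵥ v) f := by
  rw [linSubst, ← coe_aeval_eq_eval, ← coe_aeval_eq_eval, RingHom.coe_coe, RingHom.coe_coe,
    ← AlgHom.comp_apply, comp_aeval]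
  congr 2
  ext i
  exact A.toMvPolynomial_eval_eq_apply i v

lemma eval_linSubst_fin_two (a b c d x y : R) (f : MvPolynomial (Fin 2) R) :
    eval ![x, y] (linSubst !![a, b; c, d] f) = eval ![a * x + b * y, c * x + d * y] f := by
  rw [eval_linSubst]
  congr 2
  ext i
  fin_cases i <;> simp [Matrix.mulVec, dotProduct]

lemma linSubst_X (A : Matrix n n R) (i : n) : linSubst A (X i) = ∑ j, C (A i j) * X j := by
  simp [linSubst, Matrix.toMvPolynomial, C_mul_X_eq_monomial]

lemma linSubst_one [DecidableEq n] (f : MvPolynomial n R) : linSubst 1 f = f := by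
  simp [linSubst]

lemma linSubst_linSubst (A B : Matrix n n R) (f : MvPolynomial n R) :
    linSubst B (linSubst A f) = linSubst (A * B) f := by
  rw [linSubst, linSubst, linSubst, ← AlgHom.comp_apply, comp_aeval]
  congr 2
  ext1 i
  exact (A.toMvPolynomial_mul B i).symm

lemma linSubst_mul_of_fixed {A : Matrix n n R} {f : MvPolynomial n R} (hf : linSubst A f = f)
    (B : Matrix n n R) : linSubst (A * B) f = linSubst B f := by
  rw [← linSubst_linSubst, hf]

lemma isHomogeneous_linSubst {r : ℕ} {f : MvPolynomial n R} (A : Matrix n n R)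
    (hf : f.IsHomogeneous r) : (linSubst A f).IsHomogeneous r := by
  simpa [linSubst] using hf.aeval A.toMvPolynomial A.toMvPolynomial_isHomogeneous

lemma sum_eq_of_mem_support {r : ℕ} {f : MvPolynomial n R} (hf : f.IsHomogeneous r)
    {d : n →₀ ℕ} (hd : d ∈ f.support) : ∑ i, d i = r := by
  rw [← Finsupp.degree_eq_sum]
  exact of_not_not (mt hf.coeff_eq_zero (mem_support_iff.1 hd))

end CommSemiring

variable [CommRing R] {r : ℕ} {f : MvPolynomial n R}

lemma linSubst_neg (A : Matrix n n R) (hf : f.IsHomogeneous r) :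
    linSubst (-A) f = (-1) ^ r * linSubst A f := by
  have hneg (i : n) : (-A).toMvPolynomial i = -A.toMvPolynomial i := by
    simp [Matrix.toMvPolynomial]
  simp only [linSubst, aeval_def, eval₂_eq', Finset.mul_sum]
  refine Finset.sum_congr rfl fun d hd => ?_
  simp only [hneg, neg_pow (Matrix.toMvPolynomial A _), Finset.prod_mul_distrib,
    Finset.prod_pow_eq_pow_sum, sum_eq_of_mem_support hf hd]
  ring

lemma linSubst_neg_of_even (hr : Even r) (A : Matrix n n R) (hf : f.IsHomogeneous r) :
    linSubst (-A) f = linSubst A f := by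
  rw [linSubst_neg A hf, hr.neg_one_pow, one_mul]

end LinearSubstitution

section Transfer

variable {R : Type*} [CommRing R]

/-- The matrix of `(x, y) ↦ (x, x + y)`. -/
abbrev lowerShear : Matrix (Fin 2) (Fin 2) R := !![1, 0; 1, 1]

/-- The matrix of `(x, y) ↦ (x + y, y)`. -/
abbrev upperShear : Matrix (Fin 2) (Fin 2) R := !![1, 1; 0, 1]

/-- The matrix of `(x, y) ↦ (y, x)`. -/
abbrev swap : Matrix (Fin 2) (Fin 2) R := !![0, 1; 1, 0]

/-- The matrix of `(x, y) ↦ (y, -x - y)`, of order three; with `swap` it generates a group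
isomorphic to `S₃`. -/
abbrev rotation : Matrix (Fin 2) (Fin 2) R := !![0, 1; -1, -1]

/-- The matrix of `(x, y) ↦ (x, -y)`. -/
abbrev reflection : Matrix (Fin 2) (Fin 2) R := !![1, 0; 0, -1]

/-- The operator `(T f)(x, y) = f(x, x + y) + f(x + y, y)`, through which one row of the Stern array
determines the sums over the next. -/
noncomputable def transfer : End R (MvPolynomial (Fin 2) R) :=
  (linSubst lowerShear).toLinearMap + (linSubst upperShear).toLinearMap

lemma transfer_apply (f : MvPolynomial (Fin 2) R) :
    transfer f = linSubst lowerShear f + linSubst upperShear f := rfl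

/-- The binary forms of degree `r` invariant under exchanging the variables. -/
noncomputable def symmetricForms (R : Type*) [CommRing R] (r : ℕ) :
    Submodule R (MvPolynomial (Fin 2) R) :=
  homogeneousSubmodule (Fin 2) R r ⊓
    LinearMap.eqLocus (linSubst swap).toLinearMap LinearMap.id

/-- The binary forms of degree `r` invariant under the copy of `S₃` generated by `swap` and
`rotation`. -/
noncomputable def invariantForms (R : Type*) [CommRing R] (r : ℕ) :
    Submodule R (MvPolynomial (Fin 2) R) :=
  symmetricForms R r ⊓ LinearMap.eqLocus (linSubst rotation).toLinearMap LinearMap.id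

/-- The sum of `invariantForms R r` and its image under `reflection`: for even `r`, a space stable
under `transfer` and containing `transfer (transfer f) - f` for every symmetric form `f`. -/
noncomputable def stableForms (R : Type*) [CommRing R] (r : ℕ) :
    Submodule R (MvPolynomial (Fin 2) R) :=
  invariantForms R r ⊔ (invariantForms R r).map (linSubst reflection).toLinearMap

variable {r : ℕ} {f : MvPolynomial (Fin 2) R}

lemma mem_symmetricForms :
    f ∈ symmetricForms R r ↔ f.IsHomogeneous r ∧ linSubst swap f = f := Iff.rfl

lemma mem_invariantForms :
    f ∈ invariantForms R r ↔
      f.IsHomogeneous r ∧ linSubst swap f = f ∧ linSubst rotation f = f :=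
  and_assoc

lemma invariantForms_le_stableForms (r : ℕ) : invariantForms R r ≤ stableForms R r := le_sup_left

lemma transfer_linSubst_swap (f : MvPolynomial (Fin 2) R) :
    transfer (linSubst swap f) = linSubst swap (transfer f) := by
  simp only [transfer_apply, map_add, linSubst_linSubst]
  rw [show swap * lowerShear = upperShear * swap by simp,
    show swap * upperShear = lowerShear * swap by simp, add_comm]

lemma add_linSubst_swap_mem_symmetricForms (hf : f.IsHomogeneous r) :
    f + linSubst swap f ∈ symmetricForms R r := by
  refine mem_symmetricForms.2 ⟨hf.add (isHomogeneous_linSubst _ hf), ?_⟩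
  rw [map_add, linSubst_linSubst, show swap * swap = (1 : Matrix (Fin 2) (Fin 2) R) by
    simp [Matrix.one_fin_two], linSubst_one, add_comm]

lemma linSubst_reflection_mem_symmetricForms (hr : Even r) (hf : f ∈ symmetricForms R r) :
    linSubst reflection f ∈ symmetricForms R r := by
  obtain ⟨hhom, hswap⟩ := mem_symmetricForms.1 hf
  refine mem_symmetricForms.2 ⟨isHomogeneous_linSubst _ hhom, ?_⟩
  rw [linSubst_linSubst, show reflection * swap = -(swap * reflection : Matrix _ _ R) by simp,
    linSubst_neg_of_even hr _ hhom, linSubst_mul_of_fixed hswap]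

lemma transfer_add_reflection_mem_invariantForms (hr : Even r) (hf : f ∈ symmetricForms R r) :
    transfer f + linSubst reflection f ∈ invariantForms R r := by
  obtain ⟨hhom, hswap⟩ := mem_symmetricForms.1 hf
  refine mem_invariantForms.2 ⟨?_, ?_, ?_⟩
  · exact ((isHomogeneous_linSubst _ hhom).add (isHomogeneous_linSubst _ hhom)).add
      (isHomogeneous_linSubst _ hhom)
  · rw [map_add, ← transfer_linSubst_swap, hswap,
      (mem_symmetricForms.1 (linSubst_reflection_mem_symmetricForms hr hf)).2]
  · have hlower : linSubst rotation (linSubst lowerShear f) = linSubst reflection f := by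
      rw [linSubst_linSubst,
        show lowerShear * rotation = -(swap * reflection : Matrix _ _ R) by simp,
        linSubst_neg_of_even hr _ hhom, linSubst_mul_of_fixed hswap]
    have hupper : linSubst rotation (linSubst upperShear f) = linSubst lowerShear f := by
      rw [linSubst_linSubst, show upperShear * rotation = -(lowerShear : Matrix _ _ R) by simp,
        linSubst_neg_of_even hr _ hhom]
    have hreflection : linSubst rotation (linSubst reflection f) = linSubst upperShear f := by
      rw [linSubst_linSubst,
        show reflection * rotation = (swap * upperShear : Matrix _ _ R) by simp,
        linSubst_mul_of_fixed hswap]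
    rw [transfer_apply, map_add, map_add, hlower, hupper, hreflection]
    ring

lemma transfer_linSubst_reflection (hr : Even r) (hf : f ∈ invariantForms R r) :
    transfer (linSubst reflection f) = (2 : R) • f := by
  obtain ⟨hhom, hswap, hrot⟩ := mem_invariantForms.1 hf
  rw [transfer_apply, linSubst_linSubst, linSubst_linSubst,
    show reflection * lowerShear = (rotation * swap : Matrix _ _ R) by simp,
    show reflection * upperShear = -(swap * rotation : Matrix _ _ R) by simp,
    linSubst_neg_of_even hr _ hhom, linSubst_mul_of_fixed hrot, linSubst_mul_of_fixed hswap,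
    hswap, hrot, two_smul]

lemma transfer_mem_stableForms (hr : Even r) (hf : f ∈ stableForms R r) :
    transfer f ∈ stableForms R r := by
  obtain ⟨g, hg, _, ⟨h, hh, rfl⟩, rfl⟩ := Submodule.mem_sup.1 hf
  have hTg : transfer g ∈ stableForms R r := by
    rw [← add_sub_cancel_right (transfer g) (linSubst reflection g)]
    exact sub_mem
      (invariantForms_le_stableForms r (transfer_add_reflection_mem_invariantForms hr hg.1))
      (Submodule.mem_sup_right ⟨g, hg, rfl⟩)
  rw [map_add]
  refine add_mem hTg (invariantForms_le_stableForms r ?_)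
  rw [AlgHom.toLinearMap_apply, transfer_linSubst_reflection hr hh]
  exact Submodule.smul_mem _ _ hh

lemma transfer_transfer_sub_self_mem_stableForms (hr : Even r) (hf : f ∈ symmetricForms R r) :
    transfer (transfer f) - f ∈ stableForms R r := by
  have hinvol : linSubst reflection (linSubst reflection f) = f := by
    rw [linSubst_linSubst, show reflection * reflection = (1 : Matrix (Fin 2) (Fin 2) R) by
      simp [Matrix.one_fin_two], linSubst_one]
  have hTf := transfer_mem_stableForms hr
    (invariantForms_le_stableForms r (transfer_add_reflection_mem_invariantForms hr hf))
  have hTref : transfer (linSubst reflection f) + f ∈ stableForms R r := by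
    simpa only [hinvol] using invariantForms_le_stableForms r
      (transfer_add_reflection_mem_invariantForms hr
        (linSubst_reflection_mem_symmetricForms hr hf))
  convert sub_mem hTf hTref using 1
  rw [map_add]
  abel

end Transfer

section Invariants

variable {R : Type*} [CommRing R]

lemma linSubst_swap_X_zero : linSubst swap (X 0 : MvPolynomial (Fin 2) R) = X 1 := by
  simp [linSubst_X]

lemma linSubst_swap_X_one : linSubst swap (X 1 : MvPolynomial (Fin 2) R) = X 0 := by
  simp [linSubst_X]

lemma linSubst_rotation_X_zero : linSubst rotation (X 0 : MvPolynomial (Fin 2) R) = X 1 := by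
  simp [linSubst_X]

lemma linSubst_rotation_X_one :
    linSubst rotation (X 1 : MvPolynomial (Fin 2) R) = -X 0 - X 1 := by
  simp [linSubst_X, sub_eq_add_neg]

/-- The invariant `x² + xy + y²`, one of the two basic invariants together with
`cubicInvariant`. -/
noncomputable def quadraticInvariant (R : Type*) [CommRing R] : MvPolynomial (Fin 2) R :=
  X 0 ^ 2 + X 0 * X 1 + X 1 ^ 2

/-- The invariant `xy(x + y)`, the product of the linear forms `x`, `y`, `x + y` permuted up to sign
by `swap` and `rotation`. -/
noncomputable def cubicInvariant (R : Type*) [CommRing R] : MvPolynomial (Fin 2) R :=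
  X 0 * X 1 * (X 0 + X 1)

lemma quadraticInvariant_mem_invariantForms : quadraticInvariant R ∈ invariantForms R 2 := by
  refine mem_invariantForms.2 ⟨?_, ?_, ?_⟩
  · exact ((isHomogeneous_X_pow 0 2).add
      ((isHomogeneous_X R 0).mul (isHomogeneous_X R 1))).add (isHomogeneous_X_pow 1 2)
  all_goals
    simp only [quadraticInvariant, map_add, map_mul, map_pow, linSubst_swap_X_zero,
      linSubst_swap_X_one, linSubst_rotation_X_zero, linSubst_rotation_X_one]
    ring

lemma cubicInvariant_mem_invariantForms : cubicInvariant R ∈ invariantForms R 3 := by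
  refine mem_invariantForms.2 ⟨?_, ?_, ?_⟩
  · exact ((isHomogeneous_X R 0).mul (isHomogeneous_X R 1)).mul
      ((isHomogeneous_X R 0).add (isHomogeneous_X R 1))
  all_goals
    simp only [cubicInvariant, map_add, map_mul, linSubst_swap_X_zero, linSubst_swap_X_one,
      linSubst_rotation_X_zero, linSubst_rotation_X_one]
    ring

lemma pow_mem_invariantForms {r : ℕ} {f : MvPolynomial (Fin 2) R} (hf : f ∈ invariantForms R r)
    (m : ℕ) : f ^ m ∈ invariantForms R (r * m) := by
  obtain ⟨hhom, hswap, hrot⟩ := mem_invariantForms.1 hf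
  exact mem_invariantForms.2 ⟨hhom.pow m, by rw [map_pow, hswap], by rw [map_pow, hrot]⟩

lemma X_one_dvd_of_eval_eq_zero {r : ℕ} {f : MvPolynomial (Fin 2) R} (hf : f.IsHomogeneous r)
    (h0 : eval ![1, 0] f = 0) : X 1 ∣ f := by
  have hsupport (d : Fin 2 →₀ ℕ) (hd : d ∈ f.support) (hd1 : d 1 = 0) :
      d = Finsupp.single 0 r := by
    have hdeg := sum_eq_of_mem_support hf hd
    rw [Fin.sum_univ_two, hd1, add_zero] at hdeg
    ext i
    fin_cases i <;> simp [hd1, hdeg]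
  have hcoeff : coeff (Finsupp.single 0 r) f = 0 := by
    rw [← h0, eval_eq', Finset.sum_eq_single (Finsupp.single 0 r)]
    · simp
    · intro d hd hne
      have hd1 : d 1 ≠ 0 := mt (hsupport d hd) hne
      simp [hd1]
    · simp +contextual
  rw [X_dvd_iff_modMonomial_eq_zero]
  ext d
  by_cases hd : Finsupp.single 1 1 ≤ d
  · rw [coeff_modMonomial_of_le _ hd, coeff_zero]
  · rw [coeff_modMonomial_of_not_le _ hd, coeff_zero]
    by_contra hne
    have hd1 : d 1 = 0 := by simpa using hd
    exact hne (hsupport d (mem_support_iff.2 hne) hd1 ▸ hcoeff)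

lemma exists_isHomogeneous_of_mul {σ : Type*} [IsDomain R] {r i : ℕ} {f g : MvPolynomial σ R}
    (hf : f.IsHomogeneous i) (hfg : (f * g).IsHomogeneous r) (hne : f * g ≠ 0) :
    ∃ s, r = i + s ∧ g.IsHomogeneous s := by
  let _ := gradedAlgebra (R := R) (σ := σ)
  have hproj : (DirectSum.decompose (homogeneousSubmodule σ R) (f * g) r : MvPolynomial σ R)
      = f * g := DirectSum.decompose_of_mem_same _ hfg
  by_cases hi : i ≤ r
  · refine ⟨r - i, by omega, ?_⟩
    rw [DirectSum.coe_decompose_mul_of_left_mem_of_le _ hf hi] at hproj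
    rw [← mul_left_cancel₀ (left_ne_zero_of_mul hne) hproj]
    exact (DirectSum.decompose (homogeneousSubmodule σ R) g (r - i)).2
  · rw [DirectSum.coe_decompose_mul_of_left_mem_of_not_le _ hf hi] at hproj
    exact absurd hproj.symm hne

lemma cubicInvariant_dvd [IsDomain R] {r : ℕ} {f : MvPolynomial (Fin 2) R}
    (hf : f ∈ invariantForms R r) (h0 : eval ![1, 0] f = 0) : cubicInvariant R ∣ f := by
  obtain ⟨hhom, hswap, hrot⟩ := mem_invariantForms.1 hf
  have hprime : Prime (X 0 : MvPolynomial (Fin 2) R) := X_prime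
  have hX01 : ¬ (X 0 : MvPolynomial (Fin 2) R) ∣ X 1 := by simp [X_dvd_X]
  obtain ⟨g, hg⟩ := X_one_dvd_of_eval_eq_zero hhom h0
  have hX0f : X 0 ∣ f := by
    refine ⟨linSubst swap g, ?_⟩
    nth_rewrite 1 [← hswap, hg]
    rw [map_mul, linSubst_swap_X_one]
  obtain ⟨h, rfl⟩ := (hprime.dvd_or_dvd (hg ▸ hX0f)).resolve_left hX01
  have hrot' : (X 0 + X 1) * linSubst rotation h = -(X 0 * h) := by
    refine mul_left_cancel₀ (X_ne_zero (1 : Fin 2)) ?_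
    rw [hg] at hrot
    simp only [map_mul, linSubst_rotation_X_zero, linSubst_rotation_X_one] at hrot
    linear_combination -hrot
  have hX0 : X 0 ∣ (X 0 + X 1) * linSubst rotation h := hrot' ▸ (dvd_mul_right _ _).neg_right
  obtain ⟨k, hk⟩ := (hprime.dvd_or_dvd hX0).resolve_left
    (by rwa [dvd_add_right dvd_rfl])
  refine ⟨-k, mul_left_cancel₀ (X_ne_zero (0 : Fin 2)) ?_⟩
  rw [hg, cubicInvariant]
  rw [hk] at hrot'
  linear_combination X 0 * X 1 * hrot'

lemma exists_eq_cubicInvariant_mul [IsDomain R] {r : ℕ} {f : MvPolynomial (Fin 2) R}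
    (hf : f ∈ invariantForms R r) (hne : f ≠ 0) (h0 : eval ![1, 0] f = 0) :
    ∃ s, r = 3 + s ∧ ∃ g ∈ invariantForms R s, f = cubicInvariant R * g := by
  obtain ⟨g, rfl⟩ := cubicInvariant_dvd hf h0
  obtain ⟨hcubic, hcswap, hcrot⟩ :=
    mem_invariantForms.1 (cubicInvariant_mem_invariantForms (R := R))
  obtain ⟨hhom, hswap, hrot⟩ := mem_invariantForms.1 hf
  obtain ⟨s, rfl, hg⟩ := exists_isHomogeneous_of_mul hcubic hhom hne
  rw [map_mul, hcswap] at hswap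
  rw [map_mul, hcrot] at hrot
  have hcne := left_ne_zero_of_mul hne
  exact ⟨s, rfl, g,
    mem_invariantForms.2 ⟨hg, mul_left_cancel₀ hcne hswap, mul_left_cancel₀ hcne hrot⟩, rfl⟩

lemma eval_eq_zero_of_odd [IsDomain R] [NeZero (2 : R)] {r : ℕ} (hr : Odd r)
    {f : MvPolynomial (Fin 2) R} (hf : f ∈ invariantForms R r) : eval ![1, 0] f = 0 := by
  obtain ⟨hhom, hswap, hrot⟩ := mem_invariantForms.1 hf
  have hneg : linSubst (-(swap * rotation)) f = -f := by
    rw [linSubst_neg _ hhom, hr.neg_one_pow, linSubst_mul_of_fixed hswap, hrot, neg_one_mul]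
  have heval := congrArg (eval ![1, 0]) hneg
  rw [map_neg, show -(swap * rotation) = (!![1, 1; 0, -1] : Matrix _ _ R) by simp,
    eval_linSubst_fin_two, mul_one, mul_zero, mul_zero, zero_mul, add_zero, add_zero] at heval
  have htwo : (2 : R) * eval ![1, 0] f = 0 := by linear_combination heval
  exact (mul_eq_zero.1 htwo).resolve_left two_ne_zero

lemma exists_eq_cubicInvariant_sq_mul [IsDomain R] [NeZero (2 : R)] {r : ℕ} (hr : Even r)
    {f : MvPolynomial (Fin 2) R} (hf : f ∈ invariantForms R r) (hne : f ≠ 0)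
    (h0 : eval ![1, 0] f = 0) :
    ∃ s, r = 6 + s ∧ ∃ g ∈ invariantForms R s, f = cubicInvariant R ^ 2 * g := by
  obtain ⟨s, rfl, g, hg, rfl⟩ := exists_eq_cubicInvariant_mul hf hne h0
  have hs : Odd s := by grind
  obtain ⟨t, rfl, h, hh, rfl⟩ :=
    exists_eq_cubicInvariant_mul hg (right_ne_zero_of_mul hne) (eval_eq_zero_of_odd hs hg)
  exact ⟨t, by omega, h, hh, by ring⟩

/-- The monomials of degree `2m` in `quadraticInvariant` and the square of `cubicInvariant`, indexed
by the exponent of the latter. -/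
noncomputable def evenInvariant (R : Type*) [CommRing R] (m : ℕ) (i : Fin (m / 3 + 1)) :
    MvPolynomial (Fin 2) R :=
  cubicInvariant R ^ (2 * i.1) * quadraticInvariant R ^ (m - 3 * i.1)

lemma cubicInvariant_sq_mul_mem_span {m : ℕ} {f : MvPolynomial (Fin 2) R}
    (hf : f ∈ Submodule.span R (Set.range (evenInvariant R m))) :
    cubicInvariant R ^ 2 * f ∈ Submodule.span R (Set.range (evenInvariant R (m + 3))) := by
  have hmul := Submodule.mem_map_of_mem (f := LinearMap.mulLeft R (cubicInvariant R ^ 2)) hf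
  rw [Submodule.map_span, ← Set.range_comp] at hmul
  refine Submodule.span_mono ?_ hmul
  rintro _ ⟨i, rfl⟩
  refine ⟨⟨i + 1, by omega⟩, ?_⟩
  simp only [Function.comp_apply, LinearMap.mulLeft_apply, evenInvariant,
    show m + 3 - 3 * (i.1 + 1) = m - 3 * i.1 by omega]
  ring

theorem invariantForms_le_span_evenInvariant [IsDomain R] [NeZero (2 : R)] (m : ℕ) :
    invariantForms R (2 * m) ≤ Submodule.span R (Set.range (evenInvariant R m)) := by
  induction m using Nat.strong_induction_on with
  | _ m ih =>
    intro f hf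
    set q := eval ![1, 0] f • quadraticInvariant R ^ m with hq
    have hqinv : q ∈ invariantForms R (2 * m) :=
      Submodule.smul_mem _ _ (pow_mem_invariantForms quadraticInvariant_mem_invariantForms m)
    have hqspan : q ∈ Submodule.span R (Set.range (evenInvariant R m)) :=
      Submodule.smul_mem _ _ (Submodule.subset_span ⟨0, by simp [evenInvariant]⟩)
    rw [← sub_add_cancel f q]
    refine add_mem ?_ hqspan
    rcases eq_or_ne (f - q) 0 with hzero | hne
    · rw [hzero]
      exact zero_mem _
    · have heval : eval ![1, 0] (f - q) = 0 := by simp [hq, quadraticInvariant]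
      obtain ⟨s, hs, g, hg, hfg⟩ :=
        exists_eq_cubicInvariant_sq_mul (even_two_mul m) (sub_mem hf hqinv) hne heval
      obtain ⟨k, rfl⟩ : ∃ k, m = k + 3 := ⟨m - 3, by omega⟩
      obtain rfl : s = 2 * k := by omega
      rw [hfg]
      exact cubicInvariant_sq_mul_mem_span (ih k (by omega) hg)

end Invariants

section LinearAlgebra

variable {R M : Type*} [CommRing R] [AddCommGroup M] [Module R M]

lemma coe_aeval_restrict_apply {T : End R M} {U : Submodule R M} (hU : ∀ u ∈ U, T u ∈ U)
    (p : Polynomial R) (u : U) :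
    (Polynomial.aeval (T.restrict hU) p u : M) = Polynomial.aeval T p (u : M) := by
  induction p using Polynomial.induction_on' with
  | add p q hp hq => simp [hp, hq]
  | monomial k c => simp [Polynomial.aeval_monomial, Module.End.pow_restrict k hU]

lemma exists_monic_aeval_apply_eq_zero [Nontrivial R] {T : End R M} {U : Submodule R M}
    [Module.Finite R U] [Module.Free R U] (hU : ∀ u ∈ U, T u ∈ U) {d : ℕ} (hd : finrank R U ≤ d) :
    ∃ p : Polynomial R, p.Monic ∧ p.natDegree = d ∧ ∀ u ∈ U, Polynomial.aeval T p u = 0 := by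
  have hmonic := (T.restrict hU).charpoly_monic
  refine ⟨Polynomial.X ^ (d - finrank R U) * (T.restrict hU).charpoly,
    (Polynomial.monic_X_pow _).mul hmonic, ?_, fun u hu => ?_⟩
  · rw [(Polynomial.monic_X_pow _).natDegree_mul hmonic, Polynomial.natDegree_X_pow,
      LinearMap.charpoly_natDegree, Nat.sub_add_cancel hd]
  · have hann := coe_aeval_restrict_apply hU (T.restrict hU).charpoly ⟨u, hu⟩
    rw [LinearMap.aeval_self_charpoly] at hann
    rw [map_mul, Module.End.mul_apply, ← hann]
    simp

end LinearAlgebra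

section Annihilator

variable {K : Type*} [Field K]

instance (r : ℕ) : FiniteDimensional K (invariantForms K r) := by
  have : FiniteDimensional K (homogeneousSubmodule (Fin 2) K r) :=
    Module.Finite.iff_fg.2 (homogeneousSubmodule_fg _ _ r)
  exact Submodule.finiteDimensional_of_le fun _ h => h.1.1

instance (r : ℕ) : FiniteDimensional K (stableForms K r) :=
  Submodule.finite_sup _ _

lemma finrank_invariantForms_le [NeZero (2 : K)] {r : ℕ} (hr : Even r) :
    finrank K (invariantForms K r) ≤ r / 6 + 1 := by
  obtain ⟨m, rfl⟩ := hr.two_dvd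
  have := FiniteDimensional.span_of_finite K (Set.finite_range (evenInvariant K m))
  calc finrank K (invariantForms K (2 * m))
      ≤ finrank K (Submodule.span K (Set.range (evenInvariant K m))) :=
        Submodule.finrank_mono (invariantForms_le_span_evenInvariant m)
    _ ≤ Fintype.card (Fin (m / 3 + 1)) := finrank_range_le_card _
    _ = 2 * m / 6 + 1 := by rw [Fintype.card_fin]; omega

lemma finrank_stableForms_le [NeZero (2 : K)] {r : ℕ} (hr : Even r) :
    finrank K (stableForms K r) ≤ 2 * (r / 6 + 1) := by
  have h := finrank_invariantForms_le (K := K) hr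
  calc finrank K (stableForms K r)
      ≤ finrank K (invariantForms K r)
        + finrank K ((invariantForms K r).map (linSubst reflection).toLinearMap) :=
        Submodule.finrank_add_le_finrank_add_finrank _ _
    _ ≤ (r / 6 + 1) + (r / 6 + 1) := add_le_add h ((Submodule.finrank_map_le _ _).trans h)
    _ = 2 * (r / 6 + 1) := (two_mul _).symm

theorem exists_monic_aeval_transfer_eq_zero [NeZero (2 : K)] {r : ℕ} (hr : Even r) :
    ∃ p : Polynomial K, p.Monic ∧ p.natDegree = 2 * (r / 6 + 1) + 2 ∧
      ∀ f ∈ symmetricForms K r, Polynomial.aeval transfer p f = 0 := by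
  obtain ⟨q, hq, hdeg, hann⟩ := exists_monic_aeval_apply_eq_zero
    (fun _ h => transfer_mem_stableForms hr h) (finrank_stableForms_le (K := K) hr)
  have hmonic : (Polynomial.X ^ 2 - Polynomial.C 1 : Polynomial K).Monic :=
    Polynomial.monic_X_pow_sub_C 1 two_ne_zero
  refine ⟨q * (Polynomial.X ^ 2 - Polynomial.C 1), hq.mul hmonic, ?_, fun f hf => ?_⟩
  · rw [hq.natDegree_mul hmonic, hdeg, Polynomial.natDegree_X_pow_sub_C]
  · rw [map_mul, Module.End.mul_apply]
    apply hann
    simpa [pow_two] using transfer_transfer_sub_self_mem_stableForms hr hf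

end Annihilator

section Recurrence

lemma sum_range_two_mul {M : Type*} [AddCommMonoid M] (g : ℕ → M) (m : ℕ) :
    ∑ k ∈ Finset.range (2 * m), g k = ∑ k ∈ Finset.range m, (g (2 * k) + g (2 * k + 1)) := by
  induction m with
  | zero => rfl
  | succ m ih =>
    rw [mul_add_one, Finset.sum_range_succ, Finset.sum_range_succ, ih, Finset.sum_range_succ,
      add_assoc]

lemma stern_two_mul (n : ℕ) (k : ℤ) : stern (n + 2) (2 * k) = stern (n + 1) k := by
  simp [stern]

lemma stern_two_mul_add_one (n : ℕ) (k : ℤ) :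
    stern (n + 2) (2 * k + 1) = stern (n + 1) k + stern (n + 1) (k + 1) := by
  rw [stern, if_neg (by omega)]
  congr 2 <;> omega

lemma S_add_two (n : ℕ) (f : MvPolynomial (Fin 2) ℝ) : S (n + 2) f = S (n + 1) (transfer f) := by
  rw [S, S, pow_succ' 2 (n + 1), sum_range_two_mul]
  refine Finset.sum_congr rfl fun k _ => ?_
  have hnext : 2 * (k : ℤ) + 1 + 1 = 2 * (k + 1) := by ring
  simp [transfer_apply, eval_linSubst_fin_two, hnext, stern_two_mul, stern_two_mul_add_one]

lemma S_add_one_linSubst_swap (n : ℕ) (f : MvPolynomial (Fin 2) ℝ) :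
    S (n + 1) (linSubst swap f) = S (n + 1) f := by
  induction n generalizing f with
  | zero => simp [S, stern, Finset.sum_range_succ, eval_linSubst_fin_two, add_comm]
  | succ n ih => rw [S_add_two, transfer_linSubst_swap, ih, S_add_two]

lemma S_add_one_transfer_pow (n i : ℕ) (f : MvPolynomial (Fin 2) ℝ) :
    S (n + 1) ((transfer ^ i) f) = S (n + 1 + i) f := by
  induction i generalizing f with
  | zero => rfl
  | succ i ih =>
    rw [pow_succ, Module.End.mul_apply, ih, Nat.add_right_comm n 1 i, ← S_add_two]
    congr 1
    ring

/-- `S n` as a linear functional. -/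
noncomputable def sumFunctional (n : ℕ) : MvPolynomial (Fin 2) ℝ →ₗ[ℝ] ℝ where
  toFun := S n
  map_add' f g := by simp [S, Finset.sum_add_distrib]
  map_smul' c f := by simp [S, Finset.mul_sum]

lemma sumFunctional_apply (n : ℕ) (f : MvPolynomial (Fin 2) ℝ) : sumFunctional n f = S n f := rfl

lemma S_add_one_add_linSubst_swap (n : ℕ) (f : MvPolynomial (Fin 2) ℝ) :
    S (n + 1) (f + linSubst swap f) = 2 * S (n + 1) f := by
  rw [← sumFunctional_apply, map_add, sumFunctional_apply, sumFunctional_apply,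
    S_add_one_linSubst_swap, two_mul]

lemma sum_coeff_mul_S_eq_zero {p : Polynomial ℝ} {f : MvPolynomial (Fin 2) ℝ}
    (h : Polynomial.aeval transfer p f = 0) (n : ℕ) :
    ∑ i ∈ Finset.range (p.natDegree + 1), p.coeff i * S (n + 1 + i) f = 0 := by
  have hsum := congrArg (sumFunctional (n + 1)) h
  rw [Polynomial.aeval_eq_sum_range, LinearMap.sum_apply, map_sum, map_zero] at hsum
  simpa only [LinearMap.smul_apply, map_smul, smul_eq_mul, sumFunctional_apply,
    S_add_one_transfer_pow] using hsum

lemma sum_coeff_mul_S_eq_zero_of_isHomogeneous {p : Polynomial ℝ} {r : ℕ}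
    (hp : ∀ f ∈ symmetricForms ℝ r, Polynomial.aeval transfer p f = 0)
    {f : MvPolynomial (Fin 2) ℝ} (hf : f.IsHomogeneous r) (n : ℕ) :
    ∑ i ∈ Finset.range (p.natDegree + 1), p.coeff i * S (n + 1 + i) f = 0 := by
  have hsum := sum_coeff_mul_S_eq_zero (hp _ (add_linSubst_swap_mem_symmetricForms hf)) n
  simp only [Nat.add_right_comm n 1, S_add_one_add_linSubst_swap, mul_left_comm _ (2 : ℝ),
    ← Finset.mul_sum] at hsum ⊢
  exact (mul_eq_zero.1 hsum).resolve_left two_ne_zero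

lemma eq_sum_Icc_of_sum_coeff_mul_eq_zero {R : Type*} [CommRing R] {p : Polynomial R}
    (hp : p.Monic) {u : ℕ → R} {m : ℕ}
    (h : ∑ i ∈ Finset.range (p.natDegree + 1), p.coeff i * u (m + i) = 0) :
    u (m + p.natDegree) =
      ∑ j ∈ Finset.Icc 1 p.natDegree,
        -p.coeff (p.natDegree - j) * u (m + p.natDegree - j) := by
  have hreflect : ∑ j ∈ Finset.Icc 1 p.natDegree,
      p.coeff (p.natDegree - j) * u (m + p.natDegree - j) =
        ∑ i ∈ Finset.range p.natDegree, p.coeff i * u (m + i) := by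
    have hIco := Finset.sum_Ico_reflect (fun i => p.coeff i * u (m + i)) 1 le_rfl
      (n := p.natDegree)
    rw [Nat.sub_self, Nat.add_sub_cancel, Nat.Ico_zero_eq_range] at hIco
    rw [← hIco]
    refine Finset.sum_congr (by ext; simp) fun j hj => ?_
    rw [Nat.add_sub_assoc (Finset.mem_Icc.1 hj).2]
  rw [Finset.sum_range_succ, hp.coeff_natDegree, one_mul, ← hreflect] at h
  simp only [neg_mul, Finset.sum_neg_distrib]
  exact eq_neg_of_add_eq_zero_right h

end Recurrence

end Stern

/-- For even `r`, with `ℓ = (r+12)/3` if `r ≡ 0 (mod 6)`, `ℓ = (r+10)/3` if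
`r ≡ 2 (mod 6)`, `ℓ = (r+8)/3` if `r ≡ 4 (mod 6)`, there exist reals `a_1, …, a_ℓ`
(depending only on `r`) and `N` such that for every homogeneous polynomial `f`
of degree `r` and every `n ≥ N`, `S n f = ∑_{j=1}^{ℓ} a_j S (n-j) f`. -/
theorem S_short_recurrence_even (r : ℕ) (hr : Even r) (ℓ : ℕ)
    (hℓ : (r % 6 = 0 ∧ ℓ = (r + 12) / 3) ∨ (r % 6 = 2 ∧ ℓ = (r + 10) / 3) ∨
      (r % 6 = 4 ∧ ℓ = (r + 8) / 3)) :
    ∃ (a : ℕ → ℝ) (N : ℕ), ∀ f : MvPolynomial (Fin 2) ℝ, f.IsHomogeneous r →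
      ∀ n : ℕ, N ≤ n → S n f = ∑ j ∈ Finset.Icc 1 ℓ, a j * S (n - j) f := by
  obtain ⟨p, hmonic, hdeg, hann⟩ := Stern.exists_monic_aeval_transfer_eq_zero (K := ℝ) hr
  obtain rfl : ℓ = p.natDegree := by omega
  refine ⟨fun j => -p.coeff (p.natDegree - j), p.natDegree + 1, fun f hf n hn => ?_⟩
  obtain ⟨m, rfl⟩ : ∃ m, n = m + 1 + p.natDegree := ⟨n - 1 - p.natDegree, by omega⟩
  exact Stern.eq_sum_Icc_of_sum_coeff_mul_eq_zero hmonic (u := fun k => S k f)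
    (Stern.sum_coeff_mul_S_eq_zero_of_isHomogeneous hann hf m)
end
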